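/- Canonical form for even-dimensional real subspaces of ℂⁿ: let k ≥ 1 with 2k ≤ n, and let P be a 2k-dimensional real-linear subspace of ℂⁿ. Then there exist vectors e₁, …, e_{2k} in ℂⁿ such that the family (e₁, i•e₁, e₂, i•e₂, …, e_{2k}, i•e_{2k}) is orthonormal for the real inner product, and there exist angles θ₁, …, θ_k with 0 ≤ θ₁ ≤ … ≤ θ_{k−1} ≤ π/2 and θ_{k−1} ≤ θ_k ≤ π − θ_{k−1}, such that P is the real span of the 2k vectors e_{2j−1} and cos θ_j · (i•e_{2j−1}) + sin θ_j · e_{2j} for j = 1, …, k. -/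

import Mathlib

open Complex Finset Real

/-- The real inner product on `ℂⁿ`: `⟪u,v⟫ = Re Σⱼ uⱼ · conj(vⱼ)`. -/
noncomputable def rinner {n : ℕ} (u v : EuclideanSpace ℂ (Fin n)) : ℝ :=
  (∑ j, u j * starRingEnd ℂ (v j)).re

/-- normal form of an alternating form on a subspace -/
lemma alt_aux {E : Type*} [NormedAddCommGroup E] [InnerProductSpace ℝ E] [FiniteDimensional ℝ E]
    (ω : E →ₗ[ℝ] E →ₗ[ℝ] ℝ) (P : Submodule ℝ E) (k : ℕ)
    (hP : Module.finrank ℝ P = 2 * k + 2) :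
    ∃ u ∈ P, ∃ v ∈ P, inner ℝ u u = 1 ∧ inner ℝ v v = 1 ∧ inner ℝ u v = 0 ∧
      ∀ x ∈ P, ∀ y ∈ P, inner ℝ x x = 1 → inner ℝ y y = 1 → inner ℝ x y = 0 →
        ω x y ≤ ω u v := by
  let S : Set (E × E) := {p | p.1 ∈ P ∧ p.2 ∈ P ∧ inner ℝ p.1 p.1 = (1:ℝ) ∧ inner ℝ p.2 p.2 = (1:ℝ) ∧
    inner ℝ p.1 p.2 = (0:ℝ)}
  have hPc : IsClosed (P : Set E) := P.closed_of_finiteDimensional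
  have hS : IsCompact S := by
    have : ProperSpace E := FiniteDimensional.proper ℝ E
    apply Metric.isCompact_of_isClosed_isBounded
    · refine IsClosed.inter (hPc.preimage continuous_fst) (IsClosed.inter (hPc.preimage continuous_snd)
        (IsClosed.inter ?_ (IsClosed.inter ?_ ?_)))
      · exact isClosed_eq (by fun_prop) continuous_const
      · exact isClosed_eq (by fun_prop) continuous_const
      · exact isClosed_eq (by fun_prop) continuous_const
    · apply (Metric.isBounded_closedBall (x := (0 : E × E)) (r := 1)).subset
      rintro ⟨x, y⟩ ⟨-, -, hx, hy, -⟩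
      simp only [real_inner_self_eq_norm_sq] at hx hy
      rw [mem_closedBall_zero_iff, Prod.norm_def]
      apply max_le
      · show ‖x‖ ≤ 1
        nlinarith [norm_nonneg x]
      · show ‖y‖ ≤ 1
        nlinarith [norm_nonneg y]
  have hne : S.Nonempty := by
    let b := stdOrthonormalBasis ℝ P
    let i0 : Fin (Module.finrank ℝ P) := ⟨0, by omega⟩
    let i1 : Fin (Module.finrank ℝ P) := ⟨1, by omega⟩
    have h := orthonormal_iff_ite.1 b.orthonormal
    refine ⟨((b i0 : E), (b i1 : E)), (b i0).2, (b i1).2, ?_, ?_, ?_⟩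
    · exact (h i0 i0).trans (if_pos rfl)
    · exact (h i1 i1).trans (if_pos rfl)
    · exact (h i0 i1).trans (if_neg (by simp [i0, i1]))
  have hcont : ContinuousOn (fun p : E × E => ω p.1 p.2) S := by
    have : Continuous (fun p : E × E => ω p.1 p.2) := by
      let ω' : E →ₗ[ℝ] E →L[ℝ] ℝ := (LinearMap.toContinuousLinearMap : (E →ₗ[ℝ] ℝ) ≃ₗ[ℝ] (E →L[ℝ] ℝ)).toLinearMap ∘ₗ ω
      have h2 : Continuous ω' := ω'.continuous_of_finiteDimensional
      exact (h2.comp continuous_fst).clm_apply continuous_snd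
    exact this.continuousOn
  obtain ⟨⟨u, v⟩, ⟨hu, hv, huu, hvv, huv⟩, hmax⟩ := hS.exists_isMaxOn hne hcont
  exact ⟨u, hu, v, hv, huu, hvv, huv, fun x hx y hy hxx hyy hxy =>
    hmax (a := (x, y)) ⟨hx, hy, hxx, hyy, hxy⟩⟩

lemma crit_aux {c d : ℝ} (hc : 0 ≤ c) (h : ∀ a b : ℝ, a^2 + b^2 = 1 → a * c + b * d ≤ c) : d = 0 := by
  by_contra hd
  have hr : 0 < c^2 + d^2 := by positivity
  set r := √(c^2+d^2)
  have hr0 : 0 < r := Real.sqrt_pos.2 hr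
  have hr2 : r^2 = c^2 + d^2 := Real.sq_sqrt hr.le
  have := h (c/r) (d/r) (by field_simp; linarith)
  have h2 : c / r * c + d / r * d = r := by field_simp; linarith
  rw [h2] at this
  have : 0 < d^2 := by positivity
  nlinarith

lemma alt_step {E : Type*} [NormedAddCommGroup E] [InnerProductSpace ℝ E] [FiniteDimensional ℝ E]
    (ω : E →ₗ[ℝ] E →ₗ[ℝ] ℝ) (hω : ∀ x y, ω x y = - ω y x) (P : Submodule ℝ E) (k : ℕ)
    (hP : Module.finrank ℝ P = 2 * k + 2) :
    ∃ u ∈ P, ∃ v ∈ P, inner ℝ u u = 1 ∧ inner ℝ v v = 1 ∧ inner ℝ u v = 0 ∧ 0 ≤ ω u v ∧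
      (∀ x ∈ P, ∀ y ∈ P, inner ℝ x x = 1 → inner ℝ y y = 1 → inner ℝ x y = 0 →
        ω x y ≤ ω u v) ∧
      ∀ w ∈ P, inner ℝ w w = 1 → inner ℝ u w = 0 → inner ℝ v w = 0 → ω u w = 0 ∧ ω v w = 0 := by
  obtain ⟨u, hu, v, hv, huu, hvv, huv, hmax⟩ := alt_aux ω P k hP
  have h0 : 0 ≤ ω u v := by
    have := hmax v hv u hu hvv huu (by rw [real_inner_comm]; exact huv)
    rw [hω v u] at this
    linarith
  refine ⟨u, hu, v, hv, huu, hvv, huv, h0, hmax, fun w hw hww huw hvw => ⟨?_, ?_⟩⟩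
  · apply crit_aux h0
    intro a b hab
    have := hmax u hu (a • v + b • w) (P.add_mem (P.smul_mem _ hv) (P.smul_mem _ hw)) huu
      (by
        simp only [inner_add_left, inner_add_right, real_inner_smul_left, real_inner_smul_right,
          hvv, hww, hvw, real_inner_comm v w]
        linarith)
      (by simp only [inner_add_right, real_inner_smul_right, huv, huw]; simp)
    simpa using this
  · have : -ω v w = 0 := by
      apply crit_aux h0
      intro a b hab
      have := hmax (a • u + b • w) (P.add_mem (P.smul_mem _ hu) (P.smul_mem _ hw)) v hv
        (by
          simp only [inner_add_left, inner_add_right, real_inner_smul_left, real_inner_smul_right,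
            huu, hww, huw, real_inner_comm u w]
          linarith)
        hvv
        (by simp only [inner_add_left, real_inner_smul_left, huv, real_inner_comm v w, hvw]; simp)
      rw [hω v w]
      simpa using this
    linarith

lemma alt_main {E : Type*} [NormedAddCommGroup E] [InnerProductSpace ℝ E] [FiniteDimensional ℝ E]
    (ω : E →ₗ[ℝ] E →ₗ[ℝ] ℝ) (hω : ∀ x y, ω x y = - ω y x) (k : ℕ) : ∀ (P : Submodule ℝ E)
    (_ : Module.finrank ℝ P = 2 * k),
    ∃ u v : Fin k → E, (∀ j, u j ∈ P) ∧ (∀ j, v j ∈ P) ∧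
      (∀ i j, inner ℝ (u i) (u j) = if i = j then (1:ℝ) else 0) ∧
      (∀ i j, inner ℝ (v i) (v j) = if i = j then (1:ℝ) else 0) ∧
      (∀ i j, inner ℝ (u i) (v j) = (0:ℝ)) ∧
      (∀ i j, ω (u i) (u j) = 0) ∧ (∀ i j, ω (v i) (v j) = 0) ∧
      (∀ i j, i ≠ j → ω (u i) (v j) = 0) ∧ (∀ j, 0 ≤ ω (u j) (v j)) ∧
      (∀ i j, i ≤ j → ω (u j) (v j) ≤ ω (u i) (v i)) := by
  have hself : ∀ x, ω x x = 0 := fun x => by have := hω x x; linarith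
  induction k with
  | zero =>
    intro P _
    exact ⟨Fin.elim0, Fin.elim0, by simp⟩
  | succ k ih =>
    intro P hP
    obtain ⟨u0, hu0, v0, hv0, huu, hvv, huv, h0, hmax, hcrit⟩ := alt_step ω hω P k (by omega)
    have hle : Submodule.span ℝ (Set.range ![u0, v0]) ≤ P := by
      rw [Submodule.span_le]
      rintro _ ⟨i, rfl⟩
      fin_cases i
      · exact hu0
      · exact hv0
    have hon : Orthonormal ℝ ![u0, v0] := by
      rw [orthonormal_iff_ite]
      intro i j
      fin_cases i <;> fin_cases j <;> simp [-inner_self_eq_norm_sq_to_K, huu, hvv, huv, real_inner_comm u0 v0]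
    have hfr := Submodule.finrank_add_inf_finrank_orthogonal hle
    rw [finrank_span_eq_card hon.linearIndependent, hP, Fintype.card_fin] at hfr
    obtain ⟨u, v, hu, hv, uu, vv, uv, ouu, ovv, ouv, pos, anti⟩ := ih _ (by omega :
      Module.finrank ℝ ↥((Submodule.span ℝ (Set.range ![u0, v0]))ᗮ ⊓ P) = 2 * k)
    have key : ∀ x ∈ (Submodule.span ℝ (Set.range ![u0, v0]))ᗮ ⊓ P,
        x ∈ P ∧ inner ℝ u0 x = 0 ∧ inner ℝ v0 x = 0 := by
      rintro x ⟨hx, hxP⟩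
      rw [SetLike.mem_coe, Submodule.mem_orthogonal] at hx
      exact ⟨hxP, hx _ (Submodule.subset_span ⟨0, rfl⟩), hx _ (Submodule.subset_span ⟨1, rfl⟩)⟩
    have ku := fun j => key _ (hu j)
    have kv := fun j => key _ (hv j)
    have cu := fun j => hcrit _ (ku j).1 (by simpa using uu j j) (ku j).2.1 (ku j).2.2
    have cv := fun j => hcrit _ (kv j).1 (by simpa using vv j j) (kv j).2.1 (kv j).2.2
    refine ⟨Fin.cons u0 u, Fin.cons v0 v, ?_, ?_, ?_, ?_, ?_, ?_, ?_, ?_, ?_, ?_⟩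
    · intro j; refine Fin.cases ?_ (fun j => ?_) j
      · exact hu0
      · exact (ku j).1
    · intro j; refine Fin.cases ?_ (fun j => ?_) j
      · exact hv0
      · exact (kv j).1
    · intro i j
      refine Fin.cases ?_ (fun i => ?_) i <;> refine Fin.cases ?_ (fun j => ?_) j
      · simpa using huu
      · simpa [(Fin.succ_ne_zero j).symm] using (ku j).2.1
      · simpa [real_inner_comm u0] using (ku i).2.1
      · simpa using uu i j
    · intro i j
      refine Fin.cases ?_ (fun i => ?_) i <;> refine Fin.cases ?_ (fun j => ?_) j
      · simpa using hvv
      · simpa [(Fin.succ_ne_zero j).symm] using (kv j).2.2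
      · simpa [real_inner_comm v0] using (kv i).2.2
      · simpa using vv i j
    · intro i j
      refine Fin.cases ?_ (fun i => ?_) i <;> refine Fin.cases ?_ (fun j => ?_) j
      · simpa using huv
      · simpa using (kv j).2.1
      · simpa [real_inner_comm v0] using (ku i).2.2
      · simpa using uv i j
    · intro i j
      refine Fin.cases ?_ (fun i => ?_) i <;> refine Fin.cases ?_ (fun j => ?_) j
      · simpa using hself u0
      · simpa using (cu j).1
      · rw [hω]; simpa using (cu i).1
      · simpa using ouu i j
    · intro i j
      refine Fin.cases ?_ (fun i => ?_) i <;> refine Fin.cases ?_ (fun j => ?_) j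
      · simpa using hself v0
      · simpa using (cv j).2
      · rw [hω]; simpa using (cv i).2
      · simpa using ovv i j
    · intro i j
      refine Fin.cases ?_ (fun i => ?_) i <;> refine Fin.cases ?_ (fun j => ?_) j
      · simp
      · intro _; simpa using (cv j).1
      · intro _; rw [hω]; simpa using (cu i).2
      · intro h; simpa using ouv i j (by simpa using h)
    · intro j; refine Fin.cases ?_ (fun j => ?_) j
      · exact h0
      · exact pos j
    · intro i j
      refine Fin.cases ?_ (fun i => ?_) i <;> refine Fin.cases ?_ (fun j => ?_) j
      · simp
      · intro _
        simpa using hmax _ (ku j).1 _ (kv j).1 (by simpa using uu j j) (by simpa using vv j j) (uv j j)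
      · intro h; simp at h
      · intro h; simpa using anti i j (by simpa using h)

/-- imaginary part of the Hermitian inner product, as a real bilinear form -/
noncomputable def omegaForm (n : ℕ) :
    EuclideanSpace ℂ (Fin n) →ₗ[ℝ] EuclideanSpace ℂ (Fin n) →ₗ[ℝ] ℝ :=
  LinearMap.mk₂ ℝ (fun x y => (inner ℂ x y : ℂ).im)
    (fun x y z => by simp)
    (fun c x y => by
      rw [← Complex.coe_smul c x, inner_smul_left]; simp)
    (fun x y z => by simp)
    (fun c x y => by
      rw [← Complex.coe_smul c y, inner_smul_right]; simp)

lemma omegaForm_apply {n : ℕ} (x y : EuclideanSpace ℂ (Fin n)) :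
    omegaForm n x y = (inner ℂ x y : ℂ).im := rfl

lemma real_inner_eq {n : ℕ} (x y : EuclideanSpace ℂ (Fin n)) :
    (inner ℝ x y : ℝ) = (inner ℂ x y : ℂ).re := by
  simp [PiLp.inner_apply, Complex.inner]

lemma rinner_eq {n : ℕ} (x y : EuclideanSpace ℂ (Fin n)) :
    rinner x y = (inner ℂ x y : ℂ).re := by
  rw [← Complex.conj_re, inner_conj_symm]
  simp [rinner, PiLp.inner_apply]

/-- Hermitian form of the normal form, and completion to a unitary frame. -/
lemma frame_aux {n k : ℕ} (hkn : 2 * k ≤ n) (u v : Fin k → EuclideanSpace ℂ (Fin n))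
    (c : Fin k → ℝ) (hc0 : ∀ j, 0 ≤ c j) (hc1 : ∀ j, c j ≤ 1)
    (uu : ∀ i j, inner ℂ (u i) (u j) = if i = j then (1 : ℂ) else 0)
    (vv : ∀ i j, inner ℂ (v i) (v j) = if i = j then (1 : ℂ) else 0)
    (uv : ∀ i j, inner ℂ (u i) (v j) = if i = j then (c i * Complex.I : ℂ) else 0) :
    ∃ e : Fin k × Bool → EuclideanSpace ℂ (Fin n), Orthonormal ℂ e ∧
      (∀ j, e (j, false) = u j) ∧
      ∀ j, v j = c j • (Complex.I • e (j, false)) + √(1 - c j ^ 2) • e (j, true) := by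
  have vu : ∀ i j, inner ℂ (v i) (u j) = if i = j then (-(c i * Complex.I) : ℂ) else 0 := by
    intro i j
    rw [← inner_conj_symm, uv]
    by_cases h : i = j
    · subst h; simp
    · simp [h, Ne.symm h]
  let s : Fin k → ℝ := fun j => √(1 - c j ^ 2)
  have hs2 : ∀ j, s j ^ 2 = 1 - c j ^ 2 := fun j =>
    Real.sq_sqrt (by nlinarith [hc0 j, hc1 j])
  let w : Fin k → EuclideanSpace ℂ (Fin n) := fun j =>
    ((s j : ℂ)⁻¹) • (v j - (c j * Complex.I : ℂ) • u j)
  have uw : ∀ i j, inner ℂ (u i) (w j) = (0 : ℂ) := by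
    intro i j
    simp only [w, inner_smul_right, inner_sub_right, uu, uv]
    by_cases h : i = j
    · subst h; simp
    · simp [h]
  have wu : ∀ i j, inner ℂ (w i) (u j) = (0 : ℂ) := by
    intro i j
    rw [← inner_conj_symm, uw, map_zero]
  have ww : ∀ i j, s i ≠ 0 → inner ℂ (w i) (w j) = if i = j then (1 : ℂ) else 0 := by
    intro i j hi
    simp only [w, inner_smul_right, inner_smul_left, inner_sub_right, inner_sub_left, uu, uv, vu, vv]
    by_cases h : i = j
    · subst h
      have h1 : (s i : ℂ) ≠ 0 := by exact_mod_cast hi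
      have h2 : (s i : ℂ) ^ 2 = 1 - (c i : ℂ) ^ 2 := by exact_mod_cast hs2 i
      simp only [if_true, map_mul, map_inv₀, Complex.conj_ofReal, Complex.conj_I]
      field_simp
      rw [h2]
      linear_combination ((c i : ℂ) ^ 2) * Complex.I_sq
    · simp [h]
  let f : (Fin k × Bool) ⊕ Fin (n - 2 * k) → EuclideanSpace ℂ (Fin n) :=
    Sum.elim (fun p => if p.2 then w p.1 else u p.1) (fun _ => 0)
  let S : Set ((Fin k × Bool) ⊕ Fin (n - 2 * k)) :=
    {x | ∃ p : Fin k × Bool, x = Sum.inl p ∧ (p.2 = true → s p.1 ≠ 0)}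
  have hf : Orthonormal ℂ (S.domRestrict f) := by
    rw [orthonormal_iff_ite]
    rintro ⟨_, ⟨⟨i, a⟩, rfl, hi⟩⟩ ⟨_, ⟨⟨j, b⟩, rfl, hj⟩⟩
    cases a <;> cases b
    · simpa [f] using uu i j
    · simpa [f] using uw i j
    · simpa [f] using wu i j
    · simpa [f] using ww i j (hi rfl)
  obtain ⟨b, hb⟩ := hf.exists_orthonormalBasis_extension_of_card_eq
    (by simp; omega)
  refine ⟨fun p => b (Sum.inl p), b.orthonormal.comp _ Sum.inl_injective, ?_, ?_⟩
  · intro j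
    exact hb _ ⟨(j, false), rfl, by simp⟩
  · intro j
    have h1 : b (Sum.inl (j, false)) = u j := hb _ ⟨(j, false), rfl, by simp⟩
    show v j = c j • (Complex.I • b (Sum.inl (j, false))) + s j • b (Sum.inl (j, true))
    rw [h1]
    by_cases h : s j = 0
    · have hcj : c j = 1 := by
        have := hs2 j
        rw [h] at this
        nlinarith [hc0 j]
      rw [h, hcj, zero_smul, add_zero, one_smul, ← sub_eq_zero, ← inner_self_eq_zero (𝕜 := ℂ)]
      simp only [inner_smul_right, inner_smul_left, inner_sub_right, inner_sub_left, uu, uv, vu, vv, hcj]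
      simp
    · have h2 : b (Sum.inl (j, true)) = w j := hb _ ⟨(j, true), rfl, fun _ => h⟩
      have h3 : (s j : ℂ) ≠ 0 := by exact_mod_cast h
      rw [h2, ← Complex.coe_smul, ← Complex.coe_smul]
      simp only [w]
      rw [smul_inv_smul₀ h3, smul_smul]
      abel

/-- **Canonical form for even-dimensional real subspaces of `ℂⁿ`.**
Every real `2k`-dimensional subspace `P` of `ℂⁿ` (with `2k ≤ n`) is spanned by
vectors `e_{2j-1}` and `cos θ_j • (i • e_{2j-1}) + sin θ_j • e_{2j}`, `j = 1, …, k`,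
where the family `(e_1, i•e_1, …, e_{2k}, i•e_{2k})` is orthonormal and the angles
satisfy `0 ≤ θ_1 ≤ ⋯ ≤ θ_{k-1} ≤ π/2` and `θ_{k-1} ≤ θ_k ≤ π - θ_{k-1}`. -/
theorem canonical_form_even_dim_subspace {n k : ℕ} (hk : 1 ≤ k) (hkn : 2 * k ≤ n)
    (P : Submodule ℝ (EuclideanSpace ℂ (Fin n)))
    (hP : Module.finrank ℝ P = 2 * k) :
    ∃ (e : Fin (2 * k) → EuclideanSpace ℂ (Fin n)) (θ : Fin k → ℝ),
      -- the family (e_j, i•e_j) is orthonormal for the real inner product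
      (∀ p q : Fin (2 * k) × Bool,
        rinner (if p.2 then Complex.I • e p.1 else e p.1)
               (if q.2 then Complex.I • e q.1 else e q.1) = if p = q then 1 else 0) ∧
      -- angle conditions
      (∀ j : Fin k, 0 ≤ θ j ∧ θ j ≤ π) ∧
      (∀ i j : Fin k, i ≤ j → (j : ℕ) + 2 ≤ k → θ i ≤ θ j) ∧
      (∀ j : Fin k, (j : ℕ) + 2 ≤ k →
        θ j ≤ π / 2 ∧ θ j ≤ θ ⟨k - 1, by omega⟩ ∧ θ ⟨k - 1, by omega⟩ ≤ π - θ j) ∧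
      -- P is spanned by the canonical vectors
      P = Submodule.span ℝ
        (Set.range (fun j : Fin k => e ⟨2 * (j : ℕ), by have := j.isLt; omega⟩) ∪
         Set.range (fun j : Fin k =>
           Real.cos (θ j) • (Complex.I • e ⟨2 * (j : ℕ), by have := j.isLt; omega⟩) +
           Real.sin (θ j) • e ⟨2 * (j : ℕ) + 1, by have := j.isLt; omega⟩)) := by
    classical
  obtain ⟨u, v, hu, hv, uu, vv, uv, ouu, ovv, ouv, pos, anti⟩ :=
    alt_main (omegaForm n) (fun x y => by
      rw [omegaForm_apply, omegaForm_apply, ← inner_conj_symm, Complex.conj_im]) k P hP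
  simp only [omegaForm_apply] at ouu ovv ouv pos anti
  simp only [real_inner_eq] at uu vv uv
  obtain ⟨c, hc⟩ : ∃ c : Fin k → ℝ, ∀ j, c j = (inner ℂ (u j) (v j) : ℂ).im := ⟨_, fun _ => rfl⟩
  simp only [← hc] at pos anti
  have hunit : ∀ x : EuclideanSpace ℂ (Fin n), (inner ℂ x x : ℂ).re = 1 → ‖x‖ = 1 := by
    intro x hx
    have h2 : ‖x‖ ^ 2 = 1 := by
      rw [← hx, ← inner_self_eq_norm_sq (𝕜 := ℂ) x]; rfl
    nlinarith [norm_nonneg x]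
  have hc1 : ∀ j, c j ≤ 1 := by
    intro j
    rw [hc]
    refine (Complex.im_le_norm _).trans ((norm_inner_le_norm _ _).trans ?_)
    rw [hunit (u j) (by simpa using uu j j), hunit (v j) (by simpa using vv j j), one_mul]
  obtain ⟨e, he, heu, hev⟩ := frame_aux hkn u v c pos hc1
    (fun i j => by
      apply Complex.ext
      · rw [uu]; split_ifs <;> simp
      · rw [ouu]; split_ifs <;> simp)
    (fun i j => by
      apply Complex.ext
      · rw [vv]; split_ifs <;> simp
      · rw [ovv]; split_ifs <;> simp)
    (fun i j => by
      apply Complex.ext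
      · rw [uv]; split_ifs <;> simp
      · by_cases h : i = j
        · subst h; simp [← hc]
        · rw [ouv i j h]; simp [h])
  have hθ : ∀ j, Real.arccos (c j) ≤ π / 2 := fun j => Real.arccos_le_pi_div_two.2 (pos j)
  have hθm : ∀ i j : Fin k, i ≤ j → Real.arccos (c i) ≤ Real.arccos (c j) := fun i j h =>
    Real.arccos_le_arccos (anti i j h)
  let g : Fin (2 * k) → Fin k × Bool := fun m =>
    (⟨(m : ℕ) / 2, by have := m.isLt; omega⟩, decide ((m : ℕ) % 2 = 1))
  have hg : Function.Injective g := by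
    intro a b hab
    simp only [g, Prod.mk.injEq, Fin.mk.injEq, decide_eq_decide] at hab
    apply Fin.ext
    omega
  have hE := orthonormal_iff_ite.1 (he.comp g hg)
  have hg0 : ∀ j : Fin k, ∀ h : 2 * (j : ℕ) < 2 * k, g ⟨2 * (j : ℕ), h⟩ = (j, false) := by
    intro j h
    simp only [g, Prod.mk.injEq]
    refine ⟨Fin.ext ?_, ?_⟩
    · simp
    · simp
  have hg1 : ∀ j : Fin k, ∀ h : 2 * (j : ℕ) + 1 < 2 * k, g ⟨2 * (j : ℕ) + 1, h⟩ = (j, true) := by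
    intro j h
    simp only [g, Prod.mk.injEq]
    refine ⟨Fin.ext ?_, ?_⟩
    · show (2 * (j : ℕ) + 1) / 2 = j
      omega
    · simp only [decide_eq_true_eq]
      omega
  refine ⟨e ∘ g, fun j => Real.arccos (c j), ?_, fun j => ⟨Real.arccos_nonneg _, Real.arccos_le_pi _⟩,
    fun i j hij _ => hθm i j hij, ?_, ?_⟩
  · rintro ⟨i, a⟩ ⟨j, b⟩
    rw [rinner_eq]
    have hij := hE i j
    cases a <;> cases b <;> by_cases h : i = j <;>
      simp [-Function.comp_apply, -inner_self_eq_norm_sq_to_K, inner_smul_left, inner_smul_right, hij, h, hE]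
  · intro j hj
    refine ⟨hθ j, hθm _ _ ?_, ?_⟩
    · rw [Fin.le_def]
      show (j : ℕ) ≤ k - 1
      omega
    · have h1 := hθ j
      have h2 := hθ ⟨k - 1, by omega⟩
      linarith
  · have hv' : ∀ j, Real.cos (Real.arccos (c j)) • (Complex.I • e (j, false)) +
        Real.sin (Real.arccos (c j)) • e (j, true) = v j := by
      intro j
      rw [Real.cos_arccos (by linarith [pos j]) (hc1 j), Real.sin_arccos, ← hev]
    simp only [heu] at hv'
    simp only [Function.comp_apply, hg0, hg1, heu, hv']
    rw [← Set.Sum.elim_range]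
    have hon : Orthonormal ℝ (Sum.elim u v) := by
      rw [orthonormal_iff_ite]
      rintro (i | i) (j | j)
      · simpa [real_inner_eq] using uu i j
      · simpa [real_inner_eq] using uv i j
      · rw [real_inner_comm]
        simpa [real_inner_eq] using uv j i
      · simpa [real_inner_eq] using vv i j
    symm
    apply Submodule.eq_of_le_of_finrank_eq
    · rw [Submodule.span_le]
      rintro _ ⟨i | i, rfl⟩
      · exact hu i
      · exact hv i
    · have := finrank_span_eq_card hon.linearIndependent
      rw [hP]
      refine this.trans ?_
      simp
      omega
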